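/- The improper integral over the real line ∫_{−∞}^{∞} (3x³−6ix²−11x+4i)/((x−i)⁵(x+i)³) dx, where the integrand is viewed as a function from ℝ to ℂ, equals −25πi/16. -/

import Mathlib

open Complex MeasureTheory Real

/-!
For `a` in the upper and `b` in the lower half-plane, let
`J m n = ∫ x : ℝ, ((x - a) ^ m * (x - b) ^ n)⁻¹`. Partial fractions give
`(a - b) * J (m + 1) (n + 1) = J (m + 1) n - J m (n + 1)`, which is Pascal's rule up to signs and
powers of `a - b`. The boundary values are `J (m + 2) 0 = J 0 (n + 2) = 0` and
`J 1 1 = 2 * π * I / (a - b)`; the latter is the jump of the logarithm along the curve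
`(a - x) / (x - b)`, which stays in the slit plane and tends to `-1` from below the cut as
`x → -∞` and from above it as `x → ∞`. Expanding the numerator in powers of `x + I` reduces the
theorem to `J 5 0, …, J 5 3` at `a = I`, `b = -I`.
-/

open Filter Topology Bornology Polynomial

lemma ofReal_sub_ne_zero_of_im_ne_zero {a : ℂ} (ha : a.im ≠ 0) (x : ℝ) : (x : ℂ) - a ≠ 0 := by
  intro h
  rw [← sub_eq_zero.mp h, ofReal_im] at ha
  exact ha rfl

lemma tendsto_inv_ofReal_sub_cobounded (a : ℂ) :
    Tendsto (fun x : ℝ ↦ ((x : ℂ) - a)⁻¹) (cobounded ℝ) (𝓝 0) :=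
  tendsto_inv₀_cobounded.comp
    ((tendsto_sub_const_cobounded a).comp (RCLike.tendsto_ofReal_cobounded_cobounded ℂ))

lemma integrable_eval_div_eval_ofReal {P Q : ℂ[X]} (hdeg : P.degree + 2 ≤ Q.degree)
    (hQ : ∀ x : ℝ, Q.eval (x : ℂ) ≠ 0) :
    Integrable fun x : ℝ ↦ P.eval (x : ℂ) / Q.eval (x : ℂ) := by
  have hcont : Continuous fun x : ℝ ↦ P.eval (x : ℂ) / Q.eval (x : ℂ) :=
    (P.continuous.comp continuous_ofReal).div (Q.continuous.comp continuous_ofReal) hQ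
  have hdeg' : (P * (1 + X ^ 2)).degree ≤ Q.degree := by
    have h2 : (1 + X ^ 2 : ℂ[X]).degree = 2 := by compute_degree!
    rwa [degree_mul, h2]
  have hbound : (fun x : ℝ ↦ P.eval (x : ℂ) * (1 + (x : ℂ) ^ 2)) =O[cobounded ℝ]
      fun x : ℝ ↦ Q.eval (x : ℂ) := by
    simpa [Function.comp_def] using (isBigO_cobounded_of_degree_le hdeg').comp_tendsto
      (RCLike.tendsto_ofReal_cobounded_cobounded ℂ)
  refine hcont.locallyIntegrable.integrable_of_isBigO_cocompact (g := fun x : ℝ ↦ (1 + x ^ 2)⁻¹) ?_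
    (integrable_inv_one_add_sq.integrableAtFilter _)
  rw [← Metric.cobounded_eq_cocompact]
  have hpos (x : ℝ) : ((1 + x ^ 2 : ℝ) : ℂ) ≠ 0 := ofReal_ne_zero.mpr (by positivity)
  push_cast at hpos
  calc (fun x : ℝ ↦ P.eval (x : ℂ) / Q.eval (x : ℂ))
    _ = fun x : ℝ ↦ P.eval (x : ℂ) * (1 + (x : ℂ) ^ 2) *
          ((Q.eval (x : ℂ))⁻¹ * (1 + (x : ℂ) ^ 2)⁻¹) := by
      funext x
      rw [mul_comm (Q.eval (x : ℂ))⁻¹, ← mul_assoc, mul_inv_cancel_right₀ (hpos x), div_eq_mul_inv]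
    _ =O[cobounded ℝ] fun x : ℝ ↦ Q.eval (x : ℂ) *
          ((Q.eval (x : ℂ))⁻¹ * (1 + (x : ℂ) ^ 2)⁻¹) :=
      hbound.mul (Asymptotics.isBigO_refl _ _)
    _ = fun x : ℝ ↦ (((1 + x ^ 2)⁻¹ : ℝ) : ℂ) := by
      funext x
      rw [mul_inv_cancel_left₀ (hQ x)]
      norm_cast
    _ =O[cobounded ℝ] fun x : ℝ ↦ (1 + x ^ 2)⁻¹ :=
      Complex.isBigO_ofReal_left.mpr (Asymptotics.isBigO_refl _ _)

section HalfPlanes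

variable {a b : ℂ}

lemma integrable_inv_ofReal_sub_pow_mul_pow (ha : a.im ≠ 0) (hb : b.im ≠ 0) {m n : ℕ}
    (hmn : 2 ≤ m + n) :
    Integrable fun x : ℝ ↦ (((x : ℂ) - a) ^ m * ((x : ℂ) - b) ^ n)⁻¹ := by
  have hdeg : (1 : ℂ[X]).degree + 2 ≤ ((X - C a) ^ m * (X - C b) ^ n).degree := by
    simpa [degree_mul, degree_pow] using mod_cast hmn
  have hne (x : ℝ) : ((X - C a) ^ m * (X - C b) ^ n).eval (x : ℂ) ≠ 0 := by
    simpa only [eval_mul, eval_pow, eval_sub, eval_X, eval_C] using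
      mul_ne_zero (pow_ne_zero m (ofReal_sub_ne_zero_of_im_ne_zero ha x))
        (pow_ne_zero n (ofReal_sub_ne_zero_of_im_ne_zero hb x))
  simpa using integrable_eval_div_eval_ofReal hdeg hne

lemma integral_inv_ofReal_sub_pow_eq_zero (ha : a.im ≠ 0) (m : ℕ) :
    ∫ x : ℝ, (((x : ℂ) - a) ^ (m + 2))⁻¹ = 0 := by
  have hderiv (x : ℝ) : HasDerivAt (fun y : ℝ ↦ -((m : ℂ) + 1)⁻¹ * ((y : ℂ) - a)⁻¹ ^ (m + 1))
      (((x : ℂ) - a) ^ (m + 2))⁻¹ x := by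
    have hx := ofReal_sub_ne_zero_of_im_ne_zero ha x
    have hm : (m : ℂ) + 1 ≠ 0 := m.cast_add_one_ne_zero
    refine (((((hasDerivAt_id x).ofReal_comp.sub_const a).fun_inv hx).fun_pow
      (m + 1)).const_mul _).congr_deriv ?_
    simp only [Nat.cast_add, Nat.cast_one, id_eq, add_tsub_cancel_right, inv_pow, ofReal_one,
      neg_mul]
    field_simp
    ring
  have hlim : Tendsto (fun y : ℝ ↦ -((m : ℂ) + 1)⁻¹ * ((y : ℂ) - a)⁻¹ ^ (m + 1))
      (cobounded ℝ) (𝓝 0) := by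
    simpa using ((tendsto_inv_ofReal_sub_cobounded a).pow (m + 1)).const_mul (-((m : ℂ) + 1)⁻¹)
  have hint : Integrable fun x : ℝ ↦ (((x : ℂ) - a) ^ (m + 2))⁻¹ := by
    simpa using integrable_inv_ofReal_sub_pow_mul_pow ha ha (m := m + 2) (n := 0) (by lia)
  simpa using integral_of_hasDerivAt_of_tendsto hderiv hint
    (hlim.mono_left IsOrderBornology.atBot_le_cobounded)
    (hlim.mono_left IsOrderBornology.atTop_le_cobounded)

lemma sub_mul_integral_inv_ofReal_sub_pow_mul_pow (ha : a.im ≠ 0) (hb : b.im ≠ 0) {m n : ℕ}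
    (hmn : 1 ≤ m + n) :
    (a - b) * ∫ x : ℝ, (((x : ℂ) - a) ^ (m + 1) * ((x : ℂ) - b) ^ (n + 1))⁻¹ =
      (∫ x : ℝ, (((x : ℂ) - a) ^ (m + 1) * ((x : ℂ) - b) ^ n)⁻¹) -
        ∫ x : ℝ, (((x : ℂ) - a) ^ m * ((x : ℂ) - b) ^ (n + 1))⁻¹ := by
  rw [← integral_const_mul, ← integral_sub
    (integrable_inv_ofReal_sub_pow_mul_pow ha hb (by lia))
    (integrable_inv_ofReal_sub_pow_mul_pow ha hb (by lia))]
  congr with x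
  have hxa := ofReal_sub_ne_zero_of_im_ne_zero ha x
  have hxb := ofReal_sub_ne_zero_of_im_ne_zero hb x
  field_simp
  ring

lemma sub_ofReal_div_ofReal_sub_mem_slitPlane (ha : 0 < a.im) (hb : b.im < 0) (x : ℝ) :
    (a - x) / (x - b) ∈ slitPlane := by
  rw [mem_slitPlane_iff_not_le_zero]
  intro hle
  obtain ⟨r, hr, hr_eq⟩ : ∃ r : ℝ, r ≤ 0 ∧ (a - x) / (x - b) = r :=
    ⟨_, (Complex.le_def.mp hle).1, Complex.ext rfl (Complex.le_def.mp hle).2⟩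
  rw [div_eq_iff (ofReal_sub_ne_zero_of_im_ne_zero hb.ne x)] at hr_eq
  have him : a.im = -(r * b.im) := by simpa using congrArg Complex.im hr_eq
  nlinarith [mul_nonneg_of_nonpos_of_nonpos hr hb.le]

lemma im_sub_ofReal_div_ofReal_sub (a b : ℂ) (x : ℝ) :
    ((a - x) / (x - b)).im =
      ((a.im - b.im) * x + (a.re * b.im - a.im * b.re)) / normSq (x - b) := by
  rw [div_im, ← sub_div]
  simp only [sub_im, ofReal_im, sub_zero, sub_re, ofReal_re, zero_sub, mul_neg, sub_neg_eq_add]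
  ring

lemma tendsto_sub_ofReal_div_ofReal_sub_cobounded (a : ℂ) (hb : b.im ≠ 0) :
    Tendsto (fun x : ℝ ↦ (a - x) / (x - b)) (cobounded ℝ) (𝓝 (-1)) := by
  have h := ((tendsto_inv_ofReal_sub_cobounded b).const_mul (a - b)).const_add (-1)
  rw [mul_zero, add_zero] at h
  refine h.congr fun x ↦ ?_
  have hx := ofReal_sub_ne_zero_of_im_ne_zero hb x
  field_simp
  ring

lemma tendsto_log_sub_ofReal_div_ofReal_sub_atTop (ha : 0 < a.im) (hb : b.im < 0) :
    Tendsto (fun x : ℝ ↦ log ((a - x) / (x - b))) atTop (𝓝 (π * I)) := by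
  have him : ∀ᶠ x : ℝ in atTop, 0 ≤ ((a - x) / (x - b)).im := by
    filter_upwards [(tendsto_atTop_add_const_right _ (a.re * b.im - a.im * b.re)
      (tendsto_id.const_mul_atTop (sub_pos.mpr (hb.trans ha)))).eventually_ge_atTop 0] with x hx
    rw [im_sub_ofReal_div_ofReal_sub]
    exact div_nonneg hx (normSq_nonneg _)
  have hlog := tendsto_log_nhdsWithin_im_nonneg_of_re_neg_of_im_zero (z := -1) (by simp) (by simp)
  simpa [Function.comp_def] using hlog.comp (tendsto_nhdsWithin_iff.mpr
    ⟨(tendsto_sub_ofReal_div_ofReal_sub_cobounded a hb.ne).mono_left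
      IsOrderBornology.atTop_le_cobounded, him⟩)

lemma tendsto_log_sub_ofReal_div_ofReal_sub_atBot (ha : 0 < a.im) (hb : b.im < 0) :
    Tendsto (fun x : ℝ ↦ log ((a - x) / (x - b))) atBot (𝓝 (-(π * I))) := by
  have him : ∀ᶠ x : ℝ in atBot, ((a - x) / (x - b)).im < 0 := by
    filter_upwards [(tendsto_atBot_add_const_right _ (a.re * b.im - a.im * b.re)
      (tendsto_id.const_mul_atBot (sub_pos.mpr (hb.trans ha)))).eventually_lt_atBot 0] with x hx
    rw [im_sub_ofReal_div_ofReal_sub]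
    exact div_neg_of_neg_of_pos hx (normSq_pos.mpr (ofReal_sub_ne_zero_of_im_ne_zero hb.ne x))
  have hlog := tendsto_log_nhdsWithin_im_neg_of_re_neg_of_im_zero (z := -1) (by simp) (by simp)
  simpa [Function.comp_def] using hlog.comp (tendsto_nhdsWithin_iff.mpr
    ⟨(tendsto_sub_ofReal_div_ofReal_sub_cobounded a hb.ne).mono_left
      IsOrderBornology.atBot_le_cobounded, him⟩)

lemma hasDerivAt_log_sub_ofReal_div_ofReal_sub (ha : 0 < a.im) (hb : b.im < 0) (x : ℝ) :
    HasDerivAt (fun y : ℝ ↦ log ((a - y) / (y - b)))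
      ((a - b) * (((x : ℂ) - a) * ((x : ℂ) - b))⁻¹) x := by
  have hxa := ofReal_sub_ne_zero_of_im_ne_zero ha.ne' x
  have hax : a - x ≠ 0 := sub_ne_zero.mpr (sub_ne_zero.mp hxa).symm
  have hxb := ofReal_sub_ne_zero_of_im_ne_zero hb.ne x
  have hid : HasDerivAt (fun y : ℝ ↦ (y : ℂ)) 1 x := (hasDerivAt_id x).ofReal_comp
  refine (((hid.const_sub a).fun_div (hid.sub_const b) hxb).clog_real
    (sub_ofReal_div_ofReal_sub_mem_slitPlane ha hb x)).congr_deriv ?_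
  field_simp
  ring

lemma integral_inv_ofReal_sub_mul (ha : 0 < a.im) (hb : b.im < 0) :
    ∫ x : ℝ, (((x : ℂ) - a) * ((x : ℂ) - b))⁻¹ = 2 * π * I / (a - b) := by
  have hab : a - b ≠ 0 := sub_ne_zero.mpr fun h ↦ (hb.trans ha).ne (h ▸ rfl)
  have hint : Integrable fun x : ℝ ↦ (((x : ℂ) - a) * ((x : ℂ) - b))⁻¹ := by
    simpa using integrable_inv_ofReal_sub_pow_mul_pow ha.ne' hb.ne (m := 1) (n := 1) le_rfl
  rw [eq_div_iff hab, mul_comm, ← integral_const_mul, integral_of_hasDerivAt_of_tendsto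
    (hasDerivAt_log_sub_ofReal_div_ofReal_sub ha hb) (hint.const_mul _)
    (tendsto_log_sub_ofReal_div_ofReal_sub_atBot ha hb)
    (tendsto_log_sub_ofReal_div_ofReal_sub_atTop ha hb)]
  ring

theorem integral_inv_ofReal_sub_pow_mul_pow (ha : 0 < a.im) (hb : b.im < 0) (m n : ℕ) :
    ∫ x : ℝ, (((x : ℂ) - a) ^ (m + 1) * ((x : ℂ) - b) ^ (n + 1))⁻¹ =
      2 * π * I * (-1) ^ m * (m + n).choose m / (a - b) ^ (m + n + 1) := by
  have hab : a - b ≠ 0 := sub_ne_zero.mpr fun h ↦ (hb.trans ha).ne (h ▸ rfl)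
  have hrec (m n : ℕ) (hmn : 1 ≤ m + n) :=
    sub_mul_integral_inv_ofReal_sub_pow_mul_pow ha.ne' hb.ne hmn
  induction m generalizing n with
  | zero =>
    induction n with
    | zero => simpa using integral_inv_ofReal_sub_mul ha hb
    | succ n ihn =>
      apply mul_left_cancel₀ hab
      rw [hrec 0 (n + 1) (by lia), ihn]
      simp only [pow_zero, one_mul, integral_inv_ofReal_sub_pow_eq_zero hb.ne,
        Nat.choose_zero_right]
      field_simp
      ring
  | succ m ihm =>
    induction n with
    | zero =>
      apply mul_left_cancel₀ hab
      rw [hrec (m + 1) 0 (by lia), ihm]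
      simp only [pow_zero, mul_one, integral_inv_ofReal_sub_pow_eq_zero ha.ne', add_zero,
        Nat.choose_self]
      field_simp
      ring
    | succ n ihn =>
      have pascal : (m + 1 + (n + 1)).choose (m + 1) =
          (m + (n + 1)).choose m + (m + 1 + n).choose (m + 1) := by
        rw [← add_assoc, add_right_comm m 1 n, Nat.choose_succ_succ, add_assoc]
      apply mul_left_cancel₀ hab
      rw [hrec (m + 1) (n + 1) (by lia), ihn, ihm, pascal]
      push_cast
      field_simp
      ring

end HalfPlanes

lemma integrand_eq_expansion_in_powers_of_add_I (x : ℝ) :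
    (3 * (x : ℂ) ^ 3 - 6 * I * (x : ℂ) ^ 2 - 11 * (x : ℂ) + 4 * I) /
        (((x : ℂ) - I) ^ 5 * ((x : ℂ) + I) ^ 3) =
      3 * (((x : ℂ) - I) ^ 5)⁻¹
        - 15 * I * (((x : ℂ) - I) ^ 5 * ((x : ℂ) - -I) ^ 1)⁻¹
        - 32 * (((x : ℂ) - I) ^ 5 * ((x : ℂ) - -I) ^ 2)⁻¹
        + 24 * I * (((x : ℂ) - I) ^ 5 * ((x : ℂ) - -I) ^ 3)⁻¹ := by
  have hsub : (x : ℂ) - I ≠ 0 := ofReal_sub_ne_zero_of_im_ne_zero (by simp) x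
  have hadd : (x : ℂ) + I ≠ 0 := by
    simpa using ofReal_sub_ne_zero_of_im_ne_zero (a := -I) (by simp) x
  have numerator_eq : 3 * (x : ℂ) ^ 3 - 6 * I * (x : ℂ) ^ 2 - 11 * (x : ℂ) + 4 * I =
      3 * (x + I) ^ 3 - 15 * I * (x + I) ^ 2 - 32 * (x + I) + 24 * I := by
    linear_combination (21 * (x : ℂ) + 12 * I) * I_sq
  rw [numerator_eq, sub_neg_eq_add]
  field_simp

theorem stmt_12 :
    ∫ x : ℝ, (3 * (x : ℂ) ^ 3 - 6 * I * (x : ℂ) ^ 2 - 11 * (x : ℂ) + 4 * I) / (((x : ℂ) - I) ^ 5 * ((x : ℂ) + I) ^ 3) = -25 * (π : ℂ) * I / 16 := by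
  have hI : 0 < I.im := by simp
  have hnegI : (-I).im < 0 := by simp
  have hint (n : ℕ) := integrable_inv_ofReal_sub_pow_mul_pow hI.ne' hnegI.ne (m := 5) (n := n)
    (by lia)
  have hint0 : Integrable fun x : ℝ ↦ (((x : ℂ) - I) ^ 5)⁻¹ := by simpa using hint 0
  have hJ := integral_inv_ofReal_sub_pow_mul_pow hI hnegI 4
  calc
    _ = (∫ x : ℝ, 3 * (((x : ℂ) - I) ^ 5)⁻¹)
          - (∫ x : ℝ, 15 * I * (((x : ℂ) - I) ^ 5 * ((x : ℂ) - -I) ^ 1)⁻¹)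
          - (∫ x : ℝ, 32 * (((x : ℂ) - I) ^ 5 * ((x : ℂ) - -I) ^ 2)⁻¹)
          + ∫ x : ℝ, 24 * I * (((x : ℂ) - I) ^ 5 * ((x : ℂ) - -I) ^ 3)⁻¹ := by
      simp only [integrand_eq_expansion_in_powers_of_add_I]
      rw [integral_add (by fun_prop) (by fun_prop), integral_sub (by fun_prop) (by fun_prop),
        integral_sub (by fun_prop) (by fun_prop)]
    _ = 3 * 0 - 15 * I * (2 * π * I / (2 * I) ^ 5) - 32 * (2 * π * I * 5 / (2 * I) ^ 6)
          + 24 * I * (2 * π * I * 15 / (2 * I) ^ 7) := by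
      simp only [integral_const_mul]
      rw [integral_inv_ofReal_sub_pow_eq_zero hI.ne' 3, hJ 0, hJ 1, hJ 2]
      norm_num [Nat.choose, ← two_mul]
    _ = -25 * π * I / 16 := by grind [I_sq, I_ne_zero]
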